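/- Let q be a prime power and let S_T be a tangent splash of ℓ∞ in PG(2,q³) with centre T. The incidence structure whose points are the q² elements of S_T \ {T}, whose lines are the order-q-sublines of ℓ∞ that contain T and are contained in S_T, and with incidence given by inclusion, is a 2-(q², q, 1) design, that is, an affine plane of order q. -/

import Mathlib

namespace TangentSplashPaper

open Projectivization

/-- The point set of the projective plane `PG(2,K)`. -/
abbrev PGPoint (K : Type*) [Field K] := Projectivization K (Fin 3 → K)

/-- `ℓ` is a line of `PG(2,K)`: the set of points lying in a fixed
2-dimensional linear subspace. -/
def IsLine {K : Type*} [Field K] (ℓ : Set (PGPoint K)) : Prop :=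
  ∃ W : Submodule K (Fin 3 → K), Module.finrank K W = 2 ∧
    ℓ = {P : PGPoint K | P.submodule ≤ W}

/-- The distinguished line `ℓ∞` of `PG(2,K)`: points whose last homogeneous
coordinate vanishes. -/
def linf (K : Type*) [Field K] : Set (PGPoint K) := {P : PGPoint K | P.rep 2 = 0}

/-- The homography of `PG(2,K)` induced by a linear automorphism of `K³`;
as maps of point sets, these are exactly the elements of `PGL(3,K)`. -/
def hmap {K : Type*} [Field K] (f : (Fin 3 → K) ≃ₗ[K] (Fin 3 → K)) :
    PGPoint K → PGPoint K :=
  Projectivization.map f.toLinearMap f.injective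

/-- The base subplane `PG(2,F)`: points admitting homogeneous coordinates in
the subfield `F`. -/
def basePlane (F K : Type*) [Field F] [Field K] [Algebra F K] : Set (PGPoint K) :=
  {P : PGPoint K | ∃ v : Fin 3 → K, ∃ hv : v ≠ 0, P = Projectivization.mk K v hv ∧
    ∀ i, v i ∈ (algebraMap F K).range}

/-- An order-`q`-subplane of `PG(2,K)` (`q = |F|`): an image of `PG(2,F)`
under a homography. -/
def IsSubplane (F : Type*) {K : Type*} [Field F] [Field K] [Algebra F K]
    (S : Set (PGPoint K)) : Prop :=
  ∃ f : (Fin 3 → K) ≃ₗ[K] (Fin 3 → K), S = hmap f '' basePlane F K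

/-- An order-`q`-subline of `PG(2,K)`: the intersection of an order-`q`-subplane
with a line of `PG(2,K)` meeting it in `q+1` points. -/
def IsSubline (F : Type*) {K : Type*} [Field F] [Field K] [Algebra F K] (q : ℕ)
    (b : Set (PGPoint K)) : Prop :=
  ∃ S ℓ : Set (PGPoint K), IsSubplane F S ∧ IsLine ℓ ∧
    (S ∩ ℓ).ncard = q + 1 ∧ b = S ∩ ℓ

/-- The splash of a subplane `π` on `ℓ∞`: all points of `ℓ∞` lying on a line
of `PG(2,K)` spanned by two points of `π`. -/
def splash {K : Type*} [Field K] (π : Set (PGPoint K)) : Set (PGPoint K) :=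
  {X : PGPoint K | X ∈ linf K ∧ ∃ P Q : PGPoint K, P ∈ π ∧ Q ∈ π ∧ P ≠ Q ∧
    ∃ ℓ : Set (PGPoint K), IsLine ℓ ∧ P ∈ ℓ ∧ Q ∈ ℓ ∧ X ∈ ℓ}

/-- `S` is a tangent splash of `ℓ∞` with centre `T`: `S` is the splash of some
order-`q`-subplane meeting `ℓ∞` exactly in the point `T`. -/
def IsTangentSplash (F : Type*) {K : Type*} [Field F] [Field K] [Algebra F K]
    (S : Set (PGPoint K)) (T : PGPoint K) : Prop :=
  ∃ π : Set (PGPoint K), IsSubplane F π ∧ π ∩ linf K = {T} ∧ S = splash π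

/-- The set `t_P`: points of `ℓ∞` lying on the extension of a line of the
subplane `π` through the point `P` (lines of `π` are the lines of `PG(2,K)`
meeting `π` in `q+1` points). -/
def pencilTrace {K : Type*} [Field K] (q : ℕ) (π : Set (PGPoint K))
    (P : PGPoint K) : Set (PGPoint K) :=
  {X : PGPoint K | X ∈ linf K ∧ ∃ ℓ : Set (PGPoint K), IsLine ℓ ∧ P ∈ ℓ ∧
    (π ∩ ℓ).ncard = q + 1 ∧ X ∈ ℓ}

/-- `w` is a vector of homogeneous coordinates of `X`. -/
def Rp {K : Type*} [Field K] (X : PGPoint K) (w : Fin 3 → K) : Prop :=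
  ∃ h : w ≠ 0, X = Projectivization.mk K w h

lemma Rp.uniq {K : Type*} [Field K] {X : PGPoint K} {v w : Fin 3 → K} (h : Rp X v) (h' : Rp X w) :
    ∃ a : K, a ≠ 0 ∧ v = a • w := by
  obtain ⟨h, rfl⟩ := h
  obtain ⟨h', e⟩ := h'
  obtain ⟨a, rfl⟩ := (Projectivization.mk_eq_mk_iff' K _ _ _ _).1 e
  exact ⟨a, fun h0 => h (by simp [h0]), rfl⟩

lemma Rp.smul {K : Type*} [Field K] {X : PGPoint K} {w : Fin 3 → K} (h : Rp X w) {a : K}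
    (ha : a ≠ 0) : Rp X (a • w) := by
  obtain ⟨h, rfl⟩ := h
  exact ⟨smul_ne_zero ha h, ((Projectivization.mk_eq_mk_iff' K _ _ _ _).2 ⟨a, rfl⟩).symm⟩

lemma Rp.eq {K : Type*} [Field K] {X Y : PGPoint K} {w : Fin 3 → K} (h : Rp X w) (h' : Rp Y w) :
    X = Y := by
  obtain ⟨h, rfl⟩ := h
  obtain ⟨h', rfl⟩ := h'
  rfl

lemma Rp.ex {K : Type*} [Field K] (X : PGPoint K) : ∃ w, Rp X w :=
  ⟨X.rep, X.rep_nonzero, X.mk_rep.symm⟩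

lemma Rp.mem_linf {K : Type*} [Field K] {X : PGPoint K} {w : Fin 3 → K} (h : Rp X w) :
    X ∈ linf K ↔ w 2 = 0 := by
  obtain ⟨a, ha, e⟩ := Rp.uniq (⟨X.rep_nonzero, X.mk_rep.symm⟩ : Rp X X.rep) h
  simp [linf, e, ha]

lemma Rp.mem_line {K : Type*} [Field K] {X : PGPoint K} {w : Fin 3 → K} (h : Rp X w)
    (W : Submodule K (Fin 3 → K)) : X ∈ {P : PGPoint K | P.submodule ≤ W} ↔ w ∈ W := by
  obtain ⟨h, rfl⟩ := h
  simp [Projectivization.submodule_mk]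

lemma Rp.hmap {K : Type*} [Field K] {X : PGPoint K} {w : Fin 3 → K} (h : Rp X w)
    (f : (Fin 3 → K) ≃ₗ[K] (Fin 3 → K)) : Rp (hmap f X) (f w) := by
  obtain ⟨h, rfl⟩ := h
  exact ⟨by simpa using h, rfl⟩

lemma li_of_ne {K : Type*} [Field K] {X Y : PGPoint K} {v w : Fin 3 → K} (h : Rp X v) (h' : Rp Y w)
    (hne : X ≠ Y) : LinearIndependent K ![v, w] := by
  rw [LinearIndependent.pair_iff' h.1]
  intro a e
  apply hne
  subst e
  have : a ≠ 0 := fun h0 => h'.1 (by simp [h0])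
  exact (h.smul this).eq h'

lemma exists_ext {K : Type*} [Field K] {v w : Fin 3 → K} (h : LinearIndependent K ![v, w]) :
    ∃ g : (Fin 3 → K) ≃ₗ[K] (Fin 3 → K), g (Pi.single 0 1) = v ∧ g (Pi.single 1 1) = w := by
  have h0 : LinearIndependent K ![(Pi.single 0 1 : Fin 3 → K), Pi.single 1 1] := by
    rw [LinearIndependent.pair_iff]
    intro s t e
    have e0 := congrFun e 0
    have e1 := congrFun e 1
    simp at e0 e1
    exact ⟨e0, e1⟩
  let f := h0.linearCombinationEquiv.symm ≪≫ₗ h.linearCombinationEquiv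
  have : FiniteDimensional K (Submodule.span K (Set.range ![(Pi.single 0 1 : Fin 3 → K), Pi.single 1 1])) :=
    .span_of_finite K (Set.finite_range _)
  obtain ⟨g, hg⟩ := Submodule.exists_linearEquiv_restrict_eq f
  have q0 {v w : Fin 3 → K} (h : LinearIndependent K ![v, w]) :
    h.linearCombinationEquiv (Finsupp.single 0 1) = v := by simp
  have q1 {v w : Fin 3 → K} (h : LinearIndependent K ![v, w]) :
    h.linearCombinationEquiv (Finsupp.single 1 1) = w := by simp
  refine ⟨g, ?_, ?_⟩
  · rw [← q0 h0, ← hg]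
    refine Eq.trans ?_ (q0 h)
    simp only [f, LinearEquiv.trans_apply, LinearEquiv.symm_apply_apply]
  · rw [← q1 h0, ← hg]
    refine Eq.trans ?_ (q1 h)
    simp only [f, LinearEquiv.trans_apply, LinearEquiv.symm_apply_apply]

/-- the subplane with a given frame -/
def SP (F : Type*) {K : Type*} [Field F] [Field K] [Algebra F K] (b : Fin 3 → Fin 3 → K) :
    Set (PGPoint K) :=
  {X | ∃ c : Fin 3 → F, Rp X (∑ i, algebraMap F K (c i) • b i)}

lemma hmap_base (F : Type*) {K : Type*} [Field F] [Field K] [Algebra F K]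
    (f : (Fin 3 → K) ≃ₗ[K] (Fin 3 → K)) (g : (Fin 3 → F) ≃ₗ[F] (Fin 3 → F)) :
    TangentSplashPaper.hmap f '' basePlane F K =
      SP F (fun i => f (algebraMap F K ∘ g (Pi.single i 1))) := by
  have key : ∀ c : Fin 3 → F, ∑ i, algebraMap F K (c i) • f (algebraMap F K ∘ g (Pi.single i 1))
      = f (algebraMap F K ∘ g c) := by
    intro c
    simp_rw [← map_smul, ← map_sum]
    congr 1
    have hc : c = ∑ i, c i • (Pi.single i 1 : Fin 3 → F) := by
      ext j; simp [Finset.sum_apply, Pi.single_apply]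
    conv_rhs => rw [hc]
    rw [map_sum]
    ext j
    simp only [Finset.sum_apply, Pi.smul_apply, Function.comp_apply, map_sum, map_smul,
      smul_eq_mul, map_mul]
  ext X
  constructor
  · rintro ⟨P, ⟨v, hv, rfl, h⟩, rfl⟩
    choose u hu using h
    refine ⟨g.symm u, ?_⟩
    rw [key]
    have : v = algebraMap F K ∘ u := by ext i; simp [hu]
    subst this
    simpa using Rp.hmap ⟨hv, rfl⟩ f
  · rintro ⟨c, h⟩
    rw [key] at h
    have h0 : algebraMap F K ∘ g c ≠ 0 := by
      intro h0
      apply h.1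
      rw [h0, map_zero]
    refine ⟨Projectivization.mk K _ h0, ⟨_, h0, rfl, fun i => ⟨_, rfl⟩⟩, ?_⟩
    exact (Rp.hmap ⟨h0, rfl⟩ f).eq h

lemma subplane_frame {F : Type*} {K : Type*} [Field F] [Field K] [Algebra F K]
    {S : Set (PGPoint K)} (hS : IsSubplane F S) {T P : PGPoint K} (hT : T ∈ S) (hP : P ∈ S)
    (hne : T ≠ P) : ∃ b : Fin 3 → Fin 3 → K, LinearIndependent K b ∧ S = SP F b ∧
      Rp T (b 0) ∧ Rp P (b 1) := by
  obtain ⟨f, rfl⟩ := hS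
  obtain ⟨T, ⟨v, hv, rfl, h⟩, rfl⟩ := hT
  obtain ⟨P, ⟨w, hw, rfl, h'⟩, rfl⟩ := hP
  choose u hu using h
  choose x hx using h'
  have : v = algebraMap F K ∘ u := by ext i; simp [hu]
  subst this
  have : w = algebraMap F K ∘ x := by ext i; simp [hx]
  subst this
  have hli := li_of_ne (X := Projectivization.mk K _ hv) (Y := Projectivization.mk K _ hw)
    ⟨hv, rfl⟩ ⟨hw, rfl⟩ (fun e => hne (by rw [e]))
  have hli' : LinearIndependent F ![u, x] := by
    rw [← linearIndependent_algebraMap_comp_iff (S := K)]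
    have e : (fun i => algebraMap F K ∘ ![u, x] i) =
        ![algebraMap F K ∘ u, algebraMap F K ∘ x] := by
      ext i j
      fin_cases i <;> simp
    rw [e]
    exact hli
  obtain ⟨g, g0, g1⟩ := exists_ext hli'
  refine ⟨_, ?_, hmap_base F f g, ?_, ?_⟩
  · have h1 : LinearIndependent F (fun i : Fin 3 => g (Pi.single i 1)) := by
      have := (Pi.basisFun F (Fin 3)).linearIndependent.map' g.toLinearMap g.ker
      have e : (fun i : Fin 3 => g (Pi.single i 1)) = g ∘ Pi.basisFun F (Fin 3) := by
        ext i j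
        simp
      rw [e]
      exact this
    rw [← linearIndependent_algebraMap_comp_iff (S := K)] at h1
    exact h1.map' f.toLinearMap f.ker
  · simp only [g0]
    exact Rp.hmap ⟨hv, rfl⟩ f
  · simp only [g1]
    exact Rp.hmap ⟨hw, rfl⟩ f

lemma subplane_std (F : Type*) {K : Type*} [Field F] [Field K] [Algebra F K]
    (f : (Fin 3 → K) ≃ₗ[K] (Fin 3 → K)) :
    TangentSplashPaper.hmap f '' basePlane F K = SP F (fun i => f (Pi.single i 1)) := by
  rw [hmap_base F f (LinearEquiv.refl _ _)]
  congr 1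
  ext i : 1
  congr 1
  ext j
  by_cases h : j = i
  · subst h; simp
  · simp [h]

lemma li_std {K : Type*} [Field K] (f : (Fin 3 → K) ≃ₗ[K] (Fin 3 → K)) :
    LinearIndependent K (fun i => f (Pi.single i 1)) := by
  have := (Pi.basisFun K (Fin 3)).linearIndependent.map' f.toLinearMap f.ker
  have e : (fun i : Fin 3 => f (Pi.single i 1)) = f ∘ Pi.basisFun K (Fin 3) := by
    ext i j
    simp
  rw [e]
  exact this

lemma li3 {K : Type*} [Field K] {b : Fin 3 → Fin 3 → K} (h : LinearIndependent K b) {x y z : K}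
    (e : x • b 0 + y • b 1 + z • b 2 = 0) : x = 0 ∧ y = 0 ∧ z = 0 := by
  have := Fintype.linearIndependent_iff.1 h ![x, y, z] (by simpa [Fin.sum_univ_three] using e)
  exact ⟨this 0, this 1, this 2⟩

lemma li01 {K : Type*} [Field K] {b : Fin 3 → Fin 3 → K} (h : LinearIndependent K b) :
    LinearIndependent K ![b 0, b 1] := by
  rw [LinearIndependent.pair_iff]
  intro x y e
  have := li3 h (x := x) (y := y) (z := 0) (by simpa using e)
  exact ⟨this.1, this.2.1⟩

/-- the subline determined by two vectors -/
def SL (F : Type*) {K : Type*} [Field F] [Field K] [Algebra F K] (t p : Fin 3 → K) :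
    Set (PGPoint K) :=
  {X | ∃ x y : F, Rp X (algebraMap F K x • t + algebraMap F K y • p)}

lemma plane_mem {K : Type*} [Field K] {t p : Fin 3 → K} (h : LinearIndependent K ![t, p])
    {W : Submodule K (Fin 3 → K)} (hW : Module.finrank K W = 2) (ht : t ∈ W) (hp : p ∈ W)
    {w : Fin 3 → K} (hw : w ∈ W) : ∃ x y : K, x • t + y • p = w := by
  have h1 : Submodule.span K (Set.range ![t, p]) = W := by
    apply Submodule.eq_of_le_of_finrank_eq
    · rw [Submodule.span_le]
      rintro _ ⟨i, rfl⟩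
      fin_cases i <;> simpa
    · rw [finrank_span_eq_card h, hW]
      simp
  rw [← h1] at hw
  have h2 : Set.range ![t, p] = {t, p} := by
    ext x
    simp [eq_comm, or_comm]
  rw [h2] at hw
  exact Submodule.mem_span_pair.1 hw

lemma SP_inter {F : Type*} {K : Type*} [Field F] [Field K] [Algebra F K]
    {b : Fin 3 → Fin 3 → K} (h : LinearIndependent K b) {W : Submodule K (Fin 3 → K)}
    (hW : Module.finrank K W = 2) (h0 : b 0 ∈ W) (h1 : b 1 ∈ W) :
    SP F b ∩ {P | P.submodule ≤ W} = SL F (b 0) (b 1) := by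
  ext X
  constructor
  · rintro ⟨⟨c, hc⟩, hX⟩
    rw [hc.mem_line] at hX
    obtain ⟨x, y, e⟩ := plane_mem (li01 h) hW h0 h1 hX
    rw [Fin.sum_univ_three] at e hc
    have := li3 h (x := algebraMap F K (c 0) - x) (y := algebraMap F K (c 1) - y)
      (z := algebraMap F K (c 2)) (by linear_combination (norm := module) -e)
    refine ⟨c 0, c 1, ?_⟩
    simpa [this.2.2] using hc
  · rintro ⟨x, y, hX⟩
    refine ⟨⟨![x, y, 0], by simpa [Fin.sum_univ_three] using hX⟩, ?_⟩
    rw [hX.mem_line]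
    exact W.add_mem (W.smul_mem _ h0) (W.smul_mem _ h1)

lemma aff_inj {K : Type*} [Field K] {t p : Fin 3 → K} (h : LinearIndependent K ![t, p])
    {X : PGPoint K} {s s' : K} (h1 : Rp X (s • t + p)) (h2 : Rp X (s' • t + p)) : s = s' := by
  obtain ⟨a, ha, e⟩ := h1.uniq h2
  rw [LinearIndependent.pair_iff] at h
  have := h (s - a * s') (1 - a) (by linear_combination (norm := module) e)
  have h3 : a = 1 := by linear_combination -this.2
  have h4 := this.1
  rw [h3] at h4
  linear_combination h4

lemma aff_ne {K : Type*} [Field K] {t p : Fin 3 → K} (h : LinearIndependent K ![t, p])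
    {X : PGPoint K} {s : K} (h1 : Rp X (s • t + p)) (h2 : Rp X t) : False := by
  obtain ⟨a, ha, e⟩ := h1.uniq h2
  rw [LinearIndependent.pair_iff] at h
  have := h (s - a) 1 (by linear_combination (norm := module) e)
  exact one_ne_zero this.2

lemma aff_nz {K : Type*} [Field K] {t p : Fin 3 → K} (h : LinearIndependent K ![t, p])
    (s : K) : s • t + p ≠ 0 := by
  intro e
  rw [LinearIndependent.pair_iff] at h
  have := h s 1 (by simpa using e)
  exact one_ne_zero this.2

lemma SL_iff {F : Type*} {K : Type*} [Field F] [Field K] [Algebra F K] {t p : Fin 3 → K}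
    (h : LinearIndependent K ![t, p]) {X : PGPoint K} :
    X ∈ SL F t p ↔ Rp X t ∨ ∃ x : F, Rp X (algebraMap F K x • t + p) := by
  constructor
  · rintro ⟨x, y, hX⟩
    by_cases hy : y = 0
    · left
      subst hy
      have hx : x ≠ 0 := by
        rintro rfl
        exact hX.1 (by simp)
      have hx' : algebraMap F K x ≠ 0 := by simpa using hx
      have := hX.smul (inv_ne_zero hx')
      rw [map_zero, zero_smul, add_zero, smul_smul, inv_mul_cancel₀ hx', one_smul] at this
      exact this
    · right
      have hy' : algebraMap F K y ≠ 0 := by simpa using hy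
      refine ⟨x / y, ?_⟩
      have := hX.smul (inv_ne_zero hy')
      rw [smul_add, smul_smul, smul_smul, inv_mul_cancel₀ hy', one_smul] at this
      rw [map_div₀, div_eq_inv_mul]
      exact this
  · rintro (hX | ⟨x, hX⟩)
    · exact ⟨1, 0, by simpa using hX⟩
    · exact ⟨x, 1, by simpa using hX⟩

lemma aff_ncard {K : Type*} [Field K] {t p : Fin 3 → K} (h : LinearIndependent K ![t, p])
    {ι : Type*} (f : ι → K) (hf : Function.Injective f) :
    {X : PGPoint K | ∃ i, Rp X (f i • t + p)}.ncard = Nat.card ι := by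
  have e : {X : PGPoint K | ∃ i, Rp X (f i • t + p)} =
      Set.range (fun i => Projectivization.mk K (f i • t + p) (aff_nz h _)) := by
    ext X
    constructor
    · rintro ⟨i, hi, rfl⟩
      exact ⟨i, rfl⟩
    · rintro ⟨i, rfl⟩
      exact ⟨i, aff_nz h _, rfl⟩
  rw [e, ← Nat.card_coe_set_eq]
  apply Nat.card_range_of_injective
  intro i j hij
  apply hf
  exact aff_inj h ⟨aff_nz h (f i), rfl⟩ ⟨aff_nz h (f j), hij⟩

lemma SL_subline {F : Type*} {K : Type*} [Field F] [Field K] [Algebra F K] [Fintype F]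
    {t p : Fin 3 → K} (h : LinearIndependent K ![t, p]) :
    IsSubline F (Fintype.card F) (SL F t p) := by
  obtain ⟨f, hf0, hf1⟩ := exists_ext h
  have hW : Module.finrank K (Submodule.span K (Set.range ![t, p])) = 2 := by
    rw [finrank_span_eq_card h]
    simp
  have e := SP_inter (F := F) (li_std f) hW
    (by rw [hf0]; exact Submodule.subset_span ⟨0, rfl⟩)
    (by rw [hf1]; exact Submodule.subset_span ⟨1, rfl⟩)
  simp only [hf0, hf1] at e
  refine ⟨_, _, ⟨f, rfl⟩, ⟨_, hW, rfl⟩, ?_, ?_⟩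
  · rw [subplane_std, e]
    have h0 : t ≠ 0 := h.ne_zero 0
    have e2 : SL F t p = insert (Projectivization.mk K t h0)
        {X : PGPoint K | ∃ x : F, Rp X (algebraMap F K x • t + p)} := by
      ext X
      rw [SL_iff h, Set.mem_insert_iff]
      constructor
      · rintro (⟨_, h⟩ | h)
        · exact Or.inl h
        · exact Or.inr h
      · rintro (h | h)
        · exact Or.inl ⟨h0, h⟩
        · exact Or.inr h
    have hc := aff_ncard h (algebraMap F K) (algebraMap F K).injective
    have hfin : {X : PGPoint K | ∃ x : F, Rp X (algebraMap F K x • t + p)}.Finite := by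
      apply Set.finite_of_ncard_pos
      rw [hc]
      exact Nat.card_pos
    rw [e2, Set.ncard_insert_of_notMem _ hfin, hc, Nat.card_eq_fintype_card]
    rintro ⟨x, hx⟩
    exact aff_ne h hx ⟨h0, rfl⟩
  · rw [subplane_std, e]

lemma SL_scale {F : Type*} {K : Type*} [Field F] [Field K] [Algebra F K] {u v : Fin 3 → K}
    {n : K} (hn : n ≠ 0) {x y : F} (hx0 : x ≠ 0) (hy0 : y ≠ 0) :
    SL F u v = SL F ((n * algebraMap F K x) • u) ((n * algebraMap F K y) • v) := by
  have hx1 : algebraMap F K x ≠ 0 := by simpa using hx0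
  have hy1 : algebraMap F K y ≠ 0 := by simpa using hy0
  ext X
  constructor
  · rintro ⟨c, d, hX⟩
    refine ⟨c / x, d / y, ?_⟩
    have h := hX.smul hn
    rw [smul_add, smul_smul, smul_smul] at h
    rw [smul_smul, smul_smul, map_div₀, map_div₀, mul_left_comm, div_mul_cancel₀ _ hx1,
      mul_left_comm, div_mul_cancel₀ _ hy1]
    exact h
  · rintro ⟨c, d, hX⟩
    refine ⟨c * x, d * y, ?_⟩
    have h := hX.smul (inv_ne_zero hn)
    have e : ∀ z w : K, n⁻¹ * (z * (n * w)) = z * w := by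
      intro z w
      field_simp
    rw [smul_add, smul_smul, smul_smul, smul_smul, smul_smul, mul_assoc, e, mul_assoc, e] at h
    rw [map_mul, map_mul]
    exact h

lemma pair_coeff {K : Type*} [Field K] {u v : Fin 3 → K} (h : LinearIndependent K ![u, v])
    {l m n x y : K} (e : l • u + m • v = n • (x • u + y • v)) : l = n * x ∧ m = n * y := by
  rw [LinearIndependent.pair_iff] at h
  have := h (l - n * x) (m - n * y) (by linear_combination (norm := module) e)
  exact ⟨sub_eq_zero.1 this.1, sub_eq_zero.1 this.2⟩

lemma subline_uniq {F : Type*} {K : Type*} [Field F] [Field K] [Algebra F K] {q : ℕ}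
    {b : Set (PGPoint K)} (hb : IsSubline F q b) {T P Q : PGPoint K} {t p : Fin 3 → K}
    (hli : LinearIndependent K ![t, p]) (hT : Rp T t) (hP : Rp P p) (hQ : Rp Q (t + p))
    (hTb : T ∈ b) (hPb : P ∈ b) (hQb : Q ∈ b) : b = SL F t p := by
  obtain ⟨S, ℓ, hS, ⟨W, hW, hℓ⟩, -, hbe⟩ := hb
  rw [hbe, hℓ] at hTb hPb hQb
  rw [hbe, hℓ]
  clear hbe hℓ
  have hne : T ≠ P := by
    intro e
    rw [← e] at hP
    exact aff_ne hli (s := 0) (by rw [zero_smul, zero_add]; exact hP) hT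
  obtain ⟨B, hbli, hSP, hT', hP'⟩ := subplane_frame hS hTb.1 hPb.1 hne
  rw [hSP, SP_inter hbli hW ((hT'.mem_line W).1 hTb.2) ((hP'.mem_line W).1 hPb.2)] at hQb ⊢
  obtain ⟨x, y, hQ'⟩ := hQb
  obtain ⟨l, hl, e1⟩ := hT.uniq hT'
  obtain ⟨m, hm, e2⟩ := hP.uniq hP'
  obtain ⟨n, hn, e3⟩ := hQ.uniq hQ'
  rw [e1, e2] at e3
  obtain ⟨hx, hy⟩ := pair_coeff (li01 hbli) e3
  have hx0 : x ≠ 0 := by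
    intro h
    rw [h] at hx
    exact hl (by rw [hx, map_zero, mul_zero])
  have hy0 : y ≠ 0 := by
    intro h
    rw [h] at hy
    exact hm (by rw [hy, map_zero, mul_zero])
  rw [e1, e2, hx, hy]
  exact SL_scale hn hx0 hy0

lemma splash_form {F : Type*} {K : Type*} [Field F] [Field K] [Algebra F K]
    {S : Set (PGPoint K)} {T : PGPoint K} (hS : IsTangentSplash F S T) :
    ∃ (t m : Fin 3 → K) (a₁ a₂ : K), LinearIndependent K ![t, m] ∧ t 2 = 0 ∧ m 2 = 0 ∧ Rp T t ∧
      (∀ x y : F, algebraMap F K x * a₁ + algebraMap F K y * a₂ = 0 → x = 0 ∧ y = 0) ∧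
      ∀ X, X ∈ S ↔ Rp X t ∨ ∃ x y : F,
        Rp X ((algebraMap F K x * a₁ + algebraMap F K y * a₂) • t + m) := by
  obtain ⟨π, hπ, hint, hSs⟩ := hS
  have hTπ : T ∈ π ∩ linf K := by rw [hint]; rfl
  -- a second point of the subplane
  obtain ⟨P, hP, hne⟩ : ∃ P ∈ π, T ≠ P := by
    obtain ⟨f, hf⟩ := hπ
    rw [subplane_std] at hf
    have hli := li_std f
    have hr0 : Rp (Projectivization.mk K _ (hli.ne_zero 0)) (f (Pi.single 0 1)) := ⟨_, rfl⟩
    have hr1 : Rp (Projectivization.mk K _ (hli.ne_zero 1)) (f (Pi.single 1 1)) := ⟨_, rfl⟩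
    by_contra! hcon
    have m0 := hcon (Projectivization.mk K _ (hli.ne_zero 0)) (by
      rw [hf]
      refine ⟨![1, 0, 0], ?_⟩
      simpa [Fin.sum_univ_three] using hr0)
    have m1 := hcon (Projectivization.mk K _ (hli.ne_zero 1)) (by
      rw [hf]
      refine ⟨![0, 1, 0], ?_⟩
      simpa [Fin.sum_univ_three] using hr1)
    rw [← m0] at hr0
    rw [← m1] at hr1
    refine aff_ne (li01 hli) (s := 0) ?_ hr0
    rw [zero_smul, zero_add]
    exact hr1
  obtain ⟨b, hli, hSP, hT, -⟩ := subplane_frame hπ hTπ.1 hP hne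
  have ht2 : b 0 2 = 0 := hT.mem_linf.1 hTπ.2
  have hind : ∀ x y : F, algebraMap F K x * b 1 2 + algebraMap F K y * b 2 2 = 0 →
      x = 0 ∧ y = 0 := by
    intro x y e
    by_contra hcon
    have hnz : algebraMap F K x • b 1 + algebraMap F K y • b 2 ≠ 0 := by
      intro h0
      have := li3 hli (x := 0) (y := algebraMap F K x) (z := algebraMap F K y)
        (by rw [zero_smul, zero_add]; exact h0)
      apply hcon
      simpa using this
    have hr : Rp (Projectivization.mk K _ hnz) (algebraMap F K x • b 1 + algebraMap F K y • b 2) :=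
      ⟨_, rfl⟩
    have hmem : Projectivization.mk K _ hnz ∈ π ∩ linf K := by
      refine ⟨?_, ?_⟩
      · rw [hSP]
        refine ⟨![0, x, y], ?_⟩
        simpa [Fin.sum_univ_three] using hr
      · rw [hr.mem_linf]
        simpa only [Pi.add_apply, Pi.smul_apply, smul_eq_mul] using e
    rw [hint] at hmem
    have hmem' : Projectivization.mk K _ hnz = T := hmem
    rw [hmem'] at hr
    obtain ⟨a, ha, e⟩ := hT.uniq hr
    have := li3 hli (x := 1) (y := - (a * algebraMap F K x)) (z := - (a * algebraMap F K y))
      (by linear_combination (norm := module) e)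
    exact one_ne_zero this.1
  have ha1 : b 1 2 ≠ 0 := by
    intro h
    have := hind 1 0 (by rw [h]; simp)
    exact one_ne_zero this.1
  have hlim : LinearIndependent K ![b 0, b 2 2 • b 1 - b 1 2 • b 2] := by
    rw [LinearIndependent.pair_iff]
    intro x y e
    have := li3 hli (x := x) (y := y * b 2 2) (z := - (y * b 1 2))
      (by linear_combination (norm := module) e)
    refine ⟨this.1, ?_⟩
    have h2 := this.2.2
    rw [neg_eq_zero] at h2
    exact (mul_eq_zero.1 h2).resolve_right ha1
  refine ⟨b 0, b 2 2 • b 1 - b 1 2 • b 2, b 1 2, b 2 2, hlim, ht2, ?_, hT, hind, ?_⟩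
  · simp [mul_comm]
  intro X
  rw [hSs]
  constructor
  · rintro ⟨hX, P, Q, hP, hQ, hPQ, ℓ, ⟨W, hW, hℓ⟩, hPl, hQl, hXl⟩
    rw [hSP] at hP hQ
    obtain ⟨u, hu⟩ := hP
    obtain ⟨v, hv⟩ := hQ
    obtain ⟨w, hw⟩ := Rp.ex X
    rw [hℓ, hu.mem_line] at hPl
    rw [hℓ, hv.mem_line] at hQl
    rw [hℓ, hw.mem_line] at hXl
    rw [hw.mem_linf] at hX
    have hli2 := li_of_ne hu hv hPQ
    obtain ⟨α, β, e⟩ := plane_mem hli2 hW hPl hQl hXl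
    simp only [Fin.sum_univ_three] at e hu hv hli2
    set A := algebraMap F K
    have e2 : α * (A (u 1) * b 1 2 + A (u 2) * b 2 2) +
        β * (A (v 1) * b 1 2 + A (v 2) * b 2 2) = 0 := by
      have := congrFun e 2
      simp only [Pi.add_apply, Pi.smul_apply, smul_eq_mul, ht2, hX] at this
      linear_combination this
    -- a nonzero multiple of `w`
    obtain ⟨k, hk, hkw⟩ : ∃ k : K, k ≠ 0 ∧
        k • w = (A (v 1) * b 1 2 + A (v 2) * b 2 2) •
            (A (u 0) • b 0 + A (u 1) • b 1 + A (u 2) • b 2) -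
          (A (u 1) * b 1 2 + A (u 2) * b 2 2) •
            (A (v 0) • b 0 + A (v 1) • b 1 + A (v 2) • b 2) := by
      by_cases hv0 : A (v 1) * b 1 2 + A (v 2) * b 2 2 = 0
      · by_cases hu0 : A (u 1) * b 1 2 + A (u 2) * b 2 2 = 0
        · exfalso
          have h1 := hind _ _ hv0
          have h2 := hind _ _ hu0
          rw [LinearIndependent.pair_iff] at hli2
          have := hli2 (A (v 0)) (- A (u 0)) (by
            rw [h1.1, h1.2, h2.1, h2.2, map_zero]
            module)
          apply hv.1
          rw [h1.1, h1.2, this.1, map_zero]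
          module
        · have hα : α = 0 := by
            rw [hv0, mul_zero, add_zero] at e2
            exact (mul_eq_zero.1 e2).resolve_right hu0
          have hβ : β ≠ 0 := by
            intro h
            apply hw.1
            rw [← e, h, hα]
            module
          refine ⟨-(A (u 1) * b 1 2 + A (u 2) * b 2 2) / β, div_ne_zero (neg_ne_zero.2 hu0) hβ, ?_⟩
          rw [← e, hα, hv0, zero_smul, zero_add, zero_sub, smul_smul,
            div_mul_cancel₀ _ hβ, neg_smul]
      · have hα : α ≠ 0 := by
          intro h
          rw [h, zero_mul, zero_add] at e2
          have hβ := (mul_eq_zero.1 e2).resolve_right hv0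
          apply hw.1
          rw [← e, h, hβ]
          module
        refine ⟨(A (v 1) * b 1 2 + A (v 2) * b 2 2) / α, div_ne_zero hv0 hα, ?_⟩
        rw [← e, smul_add, smul_smul, smul_smul, div_mul_cancel₀ _ hα, sub_eq_add_neg, ← neg_smul]
        congr 2
        field_simp
        linear_combination e2
    have hkr := hw.smul hk
    rw [hkw] at hkr
    have hform : (A (v 1) * b 1 2 + A (v 2) * b 2 2) •
            (A (u 0) • b 0 + A (u 1) • b 1 + A (u 2) • b 2) -
          (A (u 1) * b 1 2 + A (u 2) * b 2 2) •
            (A (v 0) • b 0 + A (v 1) • b 1 + A (v 2) • b 2) =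
        (A (v 1 * u 0 - u 1 * v 0) * b 1 2 + A (v 2 * u 0 - u 2 * v 0) * b 2 2) • b 0 +
          A (u 1 * v 2 - u 2 * v 1) • (b 2 2 • b 1 - b 1 2 • b 2) := by
      simp only [map_sub, map_mul]
      module
    rw [hform] at hkr
    by_cases hd : u 1 * v 2 - u 2 * v 1 = 0
    · left
      rw [hd, map_zero, zero_smul, add_zero] at hkr
      have hs : A (v 1 * u 0 - u 1 * v 0) * b 1 2 + A (v 2 * u 0 - u 2 * v 0) * b 2 2 ≠ 0 := by
        intro h
        apply hkr.1
        rw [h, zero_smul]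
      have := hkr.smul (inv_ne_zero hs)
      rw [smul_smul, inv_mul_cancel₀ hs, one_smul] at this
      exact this
    · right
      have hd' : A (u 1 * v 2 - u 2 * v 1) ≠ 0 := by
        intro h
        exact hd ((map_eq_zero A).1 h)
      refine ⟨(u 1 * v 2 - u 2 * v 1)⁻¹ * (v 1 * u 0 - u 1 * v 0),
        (u 1 * v 2 - u 2 * v 1)⁻¹ * (v 2 * u 0 - u 2 * v 0), ?_⟩
      have := hkr.smul (inv_ne_zero hd')
      rw [smul_add, smul_smul, smul_smul, inv_mul_cancel₀ hd', one_smul] at this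
      rw [map_mul A, map_mul A, map_inv₀, mul_assoc, mul_assoc, ← mul_add]
      exact this
  · -- two points of the subplane spanning a line through `X`
    have mkpt : ∀ (c d : Fin 3 → F) (X : PGPoint K) (w : Fin 3 → K) (x y : K), Rp X w → w 2 = 0 →
        LinearIndependent K ![∑ i, algebraMap F K (c i) • b i, ∑ i, algebraMap F K (d i) • b i] →
        w = x • (∑ i, algebraMap F K (c i) • b i) + y • (∑ i, algebraMap F K (d i) • b i) →
        X ∈ splash π := by
      intro c d X w x y hw hw2 hcd e
      have hc := hcd.ne_zero 0
      have hd := hcd.ne_zero 1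
      have hrc : Rp (Projectivization.mk K _ hc) (∑ i, algebraMap F K (c i) • b i) := ⟨_, rfl⟩
      have hrd : Rp (Projectivization.mk K _ hd) (∑ i, algebraMap F K (d i) • b i) := ⟨_, rfl⟩
      have hW : Module.finrank K (Submodule.span K (Set.range
          ![∑ i, algebraMap F K (c i) • b i, ∑ i, algebraMap F K (d i) • b i])) = 2 := by
        rw [finrank_span_eq_card hcd]
        simp
      refine ⟨hw.mem_linf.2 hw2, Projectivization.mk K _ hc, Projectivization.mk K _ hd, ?_, ?_, ?_,
        _, ⟨_, hW, rfl⟩, ?_, ?_, ?_⟩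
      · rw [hSP]; exact ⟨c, hrc⟩
      · rw [hSP]; exact ⟨d, hrd⟩
      · intro h
        rw [← h] at hrd
        refine aff_ne hcd (s := 0) ?_ hrc
        rw [zero_smul, zero_add]
        exact hrd
      · rw [hrc.mem_line]; exact Submodule.subset_span ⟨0, rfl⟩
      · rw [hrd.mem_line]; exact Submodule.subset_span ⟨1, rfl⟩
      · rw [hw.mem_line, e]
        exact Submodule.add_mem _ (Submodule.smul_mem _ _ (Submodule.subset_span ⟨0, rfl⟩))
          (Submodule.smul_mem _ _ (Submodule.subset_span ⟨1, rfl⟩))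
    have s0 : ∑ i, algebraMap F K ((![1, 0, 0] : Fin 3 → F) i) • b i = b 0 := by
      simp [Fin.sum_univ_three]
    have s1 : ∑ i, algebraMap F K ((![0, 1, 0] : Fin 3 → F) i) • b i = b 1 := by
      simp [Fin.sum_univ_three]
    have s2 : ∀ y : F, ∑ i, algebraMap F K ((![y, 1, 0] : Fin 3 → F) i) • b i =
        algebraMap F K y • b 0 + b 1 := by
      intro y
      simp [Fin.sum_univ_three]
    have s3 : ∀ y : F, ∑ i, algebraMap F K ((![y, 0, 1] : Fin 3 → F) i) • b i =
        algebraMap F K y • b 0 + b 2 := by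
      intro y
      simp [Fin.sum_univ_three]
    rintro (hX | ⟨x, y, hX⟩)
    · refine mkpt ![1, 0, 0] ![0, 1, 0] X _ 1 0 hX ht2 ?_ ?_
      · rw [s0, s1]; exact li01 hli
      · rw [s0, s1]; module
    · refine mkpt ![y, 1, 0] ![-x, 0, 1] X _ (b 2 2) (- b 1 2) hX ?_ ?_ ?_
      · simp [ht2, mul_comm]
      · rw [s2, s3, LinearIndependent.pair_iff]
        intro c d e
        have := li3 hli (x := c * algebraMap F K y + d * algebraMap F K (-x)) (y := c) (z := d)
          (by linear_combination (norm := module) e)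
        exact this.2
      · rw [s2, s3, map_neg]
        module

/-- the points of `S \ {T}` together with the order-`q`-sublines of `ℓ∞`
through `T` contained in a tangent splash `S` form a 2-(q², q, 1) design (an affine
plane of order `q`): there are `q²` points, each line has `q` points distinct from `T`,
and two distinct points lie on exactly one line. -/
theorem statement3 (q : ℕ) (F K : Type) [Field F] [Field K] [Fintype F] [Fintype K]
    [Algebra F K] (hF : Fintype.card F = q) (hK : Fintype.card K = q ^ 3)
    (S : Set (PGPoint K)) (T : PGPoint K) (hS : IsTangentSplash F S T) :
    (S \ {T}).ncard = q ^ 2 ∧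
    (∀ b : Set (PGPoint K), IsSubline F q b → b ⊆ linf K → T ∈ b → b ⊆ S →
      (b \ {T}).ncard = q) ∧
    (∀ P Q : PGPoint K, P ∈ S \ {T} → Q ∈ S \ {T} → P ≠ Q →
      ∃! b : Set (PGPoint K),
        IsSubline F q b ∧ b ⊆ linf K ∧ T ∈ b ∧ b ⊆ S ∧ P ∈ b ∧ Q ∈ b) := by
  subst hF
  obtain ⟨t, m, a₁, a₂, hli, ht2, hm2, hT, hind, hSX⟩ := splash_form hS
  have hnT : ∀ X, X ≠ T → ¬ Rp X t := fun X h h' => h (h'.eq hT)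
  refine ⟨?_, ?_, ?_⟩
  · have e : S \ {T} = {X : PGPoint K | ∃ i : F × F,
        Rp X ((fun i : F × F => algebraMap F K i.1 * a₁ + algebraMap F K i.2 * a₂) i • t + m)} := by
      ext X
      constructor
      · rintro ⟨hX, hXT⟩
        rcases (hSX X).1 hX with h | ⟨x, y, h⟩
        · exact absurd h (hnT X hXT)
        · exact ⟨(x, y), h⟩
      · rintro ⟨⟨x, y⟩, h⟩
        refine ⟨(hSX X).2 (Or.inr ⟨x, y, h⟩), ?_⟩
        intro hXT
        have hXT' : X = T := hXT
        rw [hXT'] at h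
        exact aff_ne hli h hT
    rw [e, aff_ncard hli]
    · simp [sq]
    · rintro ⟨x, y⟩ ⟨x', y'⟩ h
      have h' : algebraMap F K x * a₁ + algebraMap F K y * a₂ =
        algebraMap F K x' * a₁ + algebraMap F K y' * a₂ := h
      have := hind (x - x') (y - y') (by rw [map_sub, map_sub]; linear_combination h')
      exact Prod.ext (sub_eq_zero.1 this.1) (sub_eq_zero.1 this.2)
  · rintro b ⟨S', ℓ, -, -, hc, rfl⟩ - hTb -
    rw [Set.ncard_sdiff_singleton_of_mem hTb, hc]
    rfl
  · rintro P Q ⟨hPS, hPT⟩ ⟨hQS, hQT⟩ hPQ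
    obtain ⟨x, y, hP⟩ := ((hSX P).1 hPS).resolve_left (hnT P hPT)
    obtain ⟨x', y', hQ⟩ := ((hSX Q).1 hQS).resolve_left (hnT Q hQT)
    obtain ⟨s, hs⟩ : ∃ s, s = algebraMap F K x * a₁ + algebraMap F K y * a₂ := ⟨_, rfl⟩
    obtain ⟨s', hs'⟩ : ∃ s', s' = algebraMap F K x' * a₁ + algebraMap F K y' * a₂ := ⟨_, rfl⟩
    rw [← hs] at hP
    rw [← hs'] at hQ
    have hd : s' - s ≠ 0 := by
      intro h
      rw [sub_eq_zero.1 h] at hQ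
      exact hPQ (hP.eq hQ)
    have hT' : Rp T ((s' - s) • t) := hT.smul hd
    have hQ' : Rp Q ((s' - s) • t + (s • t + m)) := by
      have e : (s' - s) • t + (s • t + m) = s' • t + m := by module
      rw [e]
      exact hQ
    have hli' : LinearIndependent K ![(s' - s) • t, s • t + m] :=
      li_of_ne hT' hP (fun h => hPT h.symm)
    refine ⟨SL F ((s' - s) • t) (s • t + m), ⟨SL_subline hli', ?_, ?_, ?_, ?_, ?_⟩, ?_⟩
    · rintro X ⟨c, d, hX⟩
      rw [hX.mem_linf]
      simp [ht2, hm2]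
    · exact (SL_iff hli').2 (Or.inl hT')
    · intro X hX
      rw [hSX]
      rcases (SL_iff hli').1 hX with h | ⟨c, h⟩
      · left
        rwa [h.eq hT']
      · right
        refine ⟨c * (x' - x) + x, c * (y' - y) + y, ?_⟩
        have e : (algebraMap F K (c * (x' - x) + x) * a₁ +
            algebraMap F K (c * (y' - y) + y) * a₂) • t + m =
            algebraMap F K c • (s' - s) • t + (s • t + m) := by
          rw [hs, hs']
          simp only [map_add, map_sub, map_mul]
          module
        rw [e]
        exact h
    · refine (SL_iff hli').2 (Or.inr ⟨0, ?_⟩)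
      rw [map_zero, zero_smul, zero_add]
      exact hP
    · refine (SL_iff hli').2 (Or.inr ⟨1, ?_⟩)
      rw [map_one, one_smul]
      exact hQ'
    · rintro b ⟨hb, -, hTb, -, hPb, hQb⟩
      exact subline_uniq hb hli' hT' hP hQ' hTb hPb hQb

end TangentSplashPaper
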